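/- arXiv:2211.16402 — 3 statements merged into one kernel-verified Lean document; each statement's English description precedes it below -/
import Mathlib

section
/- For every Boolean function f on the weight-2 slice of {0,1}^n, D(f) ≤ n − m(G_f)/2, where G_f is the graph on vertex set [n] whose edges are the pairs {i,j} with f({i,j}) = 1, and m(G_f) is the size of the largest clique or independent set of G_f. -/
/-- A deterministic decision tree querying variables indexed by `ι`. -/
inductive DTree (ι : Type) : Type where
  | leaf : Bool → DTree ι
  | node : ι → DTree ι → DTree ι → DTree ι

namespace DTree

/-- Evaluation of a decision tree on an input `x : ι → Bool`. -/
def eval {ι : Type} : DTree ι → (ι → Bool) → Bool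
  | .leaf b, _ => b
  | .node i t0 t1, x => if x i then eval t1 x else eval t0 x

/-- The number of queries made by a decision tree on an input. -/
def cost {ι : Type} : DTree ι → (ι → Bool) → ℕ
  | .leaf _, _ => 0
  | .node i t0 t1, x => 1 + (if x i then cost t1 x else cost t0 x)

end DTree

/-- `T` computes `f` on the domain `S`. -/
def Computes {ι : Type} (T : DTree ι) (S : Set (ι → Bool)) (f : (ι → Bool) → Bool) : Prop :=
  ∀ x ∈ S, T.eval x = f x

/-- Deterministic query complexity of `f` on the domain `S`: the least `d` such that some
decision tree computes `f` on `S` making at most `d` queries on every input in `S`. -/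
noncomputable def Dquery {ι : Type} (S : Set (ι → Bool)) (f : (ι → Bool) → Bool) : ℕ :=
  sInf {d | ∃ T : DTree ι, Computes T S f ∧ ∀ x ∈ S, T.cost x ≤ d}

/-- Hamming weight of `x : ι → Bool`. -/
def hamWeight {ι : Type} [Fintype ι] (x : ι → Bool) : ℕ :=
  (Finset.univ.filter fun i => x i = true).card

/-- The `k`-th cubeSlice: inputs of Hamming weight exactly `k`. -/
def cubeSlice (ι : Type) [Fintype ι] (k : ℕ) : Set (ι → Bool) :=
  {x | hamWeight x = k}

/-- The input in the weight-2 slice whose 1-positions are `i` and `j`. -/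
def pairInput {n : ℕ} (i j : Fin n) : Fin n → Bool :=
  fun t => decide (t = i ∨ t = j)

/-- `s` is monochromatic for the graph `G_f` associated to `f` on the weight-2 slice:
it is a clique or an independent set of `G_f`. -/
def IsMonoSet {n : ℕ} (f : (Fin n → Bool) → Bool) (s : Finset (Fin n)) : Prop :=
  (∀ i ∈ s, ∀ j ∈ s, i ≠ j → f (pairInput i j) = true) ∨
    (∀ i ∈ s, ∀ j ∈ s, i ≠ j → f (pairInput i j) = false)

/-- `m(G_f)`: the size of the largest clique or independent set of `G_f`. -/
noncomputable def mG {n : ℕ} (f : (Fin n → Bool) → Bool) : ℕ :=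
  sSup {m | ∃ s : Finset (Fin n), IsMonoSet f s ∧ s.card = m}

/-!
Query every vertex outside a largest monochromatic set `S`. If both 1-positions are found, the input
is known; if none is found, both lie in `S`, where `f` is constant. If a single vertex `v` is found,
the input is a pair `{v, j}` with `j ∈ S`: querying the smaller of the neighbourhood and the
non-neighbourhood of `v` in `S`, at most `|S| / 2` vertices, decides whether it is an edge.
-/

open Finset

section DecisionTrees

variable {ι : Type} {S S' : Set (ι → Bool)} {f : (ι → Bool) → Bool} {d d' : ℕ}
  {Q A : Finset ι} {x : ι → Bool}

/-- `f` has query complexity at most `d` on the domain `S`. Unlike `Dquery S f ≤ d`, this always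
provides a decision tree: the infimum defining `Dquery` is `0` when no tree computes `f`. -/
def ComputableWithin (S : Set (ι → Bool)) (f : (ι → Bool) → Bool) (d : ℕ) : Prop :=
  ∃ T : DTree ι, Computes T S f ∧ ∀ x ∈ S, T.cost x ≤ d

/-- The subcube of inputs whose coordinates in `Q` are fixed, to `1` on `A` and to `0` on `Q \ A`.
It records the outcome of querying all of `Q`. -/
def subcube (Q A : Finset ι) : Set (ι → Bool) :=
  {x | ∀ i ∈ Q, x i = true ↔ i ∈ A}

theorem apply_of_mem_subcube (hx : x ∈ subcube Q A) (hA : A ⊆ Q) {i : ι} (hi : i ∈ A) :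
    x i = true :=
  (hx i (hA hi)).mpr hi

theorem notMem_of_mem_subcube (hx : x ∈ subcube Q A) {i : ι} (hi : x i = true) (hiA : i ∉ A) :
    i ∉ Q :=
  fun hiQ => hiA ((hx i hiQ).mp hi)

theorem ComputableWithin.dquery_le (h : ComputableWithin S f d) : Dquery S f ≤ d :=
  Nat.sInf_le h

theorem ComputableWithin.mono (h : ComputableWithin S f d) (hS : S' ⊆ S) (hd : d ≤ d') :
    ComputableWithin S' f d' :=
  let ⟨T, hT, hcost⟩ := h
  ⟨T, fun x hx => hT x (hS hx), fun x hx => (hcost x (hS hx)).trans hd⟩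

theorem computableWithin_of_forall_eq {b : Bool} (h : ∀ x ∈ S, f x = b) :
    ComputableWithin S f d :=
  ⟨.leaf b, fun x hx => (h x hx).symm, fun _ _ => d.zero_le⟩

theorem ComputableWithin.query (i : ι) (h : ∀ b, ComputableWithin (S ∩ {x | x i = b}) f d) :
    ComputableWithin S f (d + 1) := by
  choose T hT hcost using h
  refine ⟨.node i (T false) (T true), fun x hx => ?_, fun x hx => ?_⟩
  · have hTx := hT (x i) x ⟨hx, rfl⟩
    cases hxi : x i <;> simpa [DTree.eval, hxi] using hTx
  · have hcostx := hcost (x i) x ⟨hx, rfl⟩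
    cases hxi : x i <;> simpa [DTree.cost, hxi, add_comm] using hcostx

theorem ComputableWithin.query_finset (Q : Finset ι)
    (h : ∀ A ⊆ Q, ComputableWithin (S ∩ subcube Q A) f d) : ComputableWithin S f (#Q + d) := by
  classical
  induction Q using Finset.induction_on generalizing S with
  | empty => exact (h ∅ subset_rfl).mono (by simp [subcube]) (by simp)
  | insert i Q hi ih =>
    rw [card_insert_of_notMem hi, add_right_comm]
    refine .query i fun b => ih fun A hA => ?_
    have hiA : i ∉ A := fun hmem => hi (hA hmem)
    refine (h (if b then insert i A else A) (by grind)).mono ?_ le_rfl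
    rintro x ⟨⟨hxS, hxi⟩, hxA⟩
    refine ⟨hxS, fun j hj => ?_⟩
    rcases mem_insert.mp hj with rfl | hjQ
    · cases b <;> simp_all
    · have hji : j ≠ i := ne_of_mem_of_not_mem hjQ hi
      cases b <;> simp [hxA j hjQ, hji]

end DecisionTrees

theorem exists_card_filter_eq_le_half {α : Type*} (s : Finset α) (g : α → Bool) :
    ∃ b, #{a ∈ s | g a = b} ≤ #s / 2 := by
  have hlt : #s < #(univ : Finset Bool) * (#s / 2 + 1) := by
    rw [card_univ, Fintype.card_bool]
    lia
  obtain ⟨b, -, hb⟩ := exists_card_fiber_lt_of_card_lt_mul (f := g) hlt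
  exact ⟨b, Nat.lt_succ_iff.mp hb⟩

section WeightTwo

variable {n : ℕ} {x : Fin n → Bool} {f : (Fin n → Bool) → Bool} {s : Finset (Fin n)}

theorem pairInput_apply_eq_true {i j t : Fin n} : pairInput i j t = true ↔ t = i ∨ t = j :=
  decide_eq_true_iff

theorem eq_pairInput_of_mem_cubeSlice {i j : Fin n} (hx : x ∈ cubeSlice (Fin n) 2)
    (hij : i ≠ j) (hi : x i = true) (hj : x j = true) : x = pairInput i j := by
  have hones : {i, j} = ({t | x t = true} : Finset (Fin n)) := by
    refine eq_of_subset_of_card_le (by grind) ?_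
    rw [card_pair hij]
    exact hx.le
  ext t
  rw [Bool.eq_iff_iff, pairInput_apply_eq_true]
  simpa using (Finset.ext_iff.mp hones t).symm

theorem exists_eq_pairInput_of_apply {v : Fin n} (hx : x ∈ cubeSlice (Fin n) 2)
    (hv : x v = true) : ∃ j, j ≠ v ∧ x = pairInput v j := by
  have hcard : 1 < #{t | x t = true} := Nat.one_lt_two.trans_eq hx.symm
  obtain ⟨j, hj, hjv⟩ := exists_mem_ne hcard v
  exact ⟨j, hjv, eq_pairInput_of_mem_cubeSlice hx hjv.symm hv ((mem_filter_univ j).mp hj)⟩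

theorem exists_eq_pairInput (hx : x ∈ cubeSlice (Fin n) 2) :
    ∃ i j, i ≠ j ∧ x = pairInput i j := by
  have hcard : 0 < #{t | x t = true} := Nat.zero_lt_two.trans_eq hx.symm
  obtain ⟨i, hi⟩ := card_pos.mp hcard
  obtain ⟨j, hji, hxij⟩ := exists_eq_pairInput_of_apply hx ((mem_filter_univ i).mp hi)
  exact ⟨i, j, hji.symm, hxij⟩

theorem computableWithin_image_pairInput {v : Fin n} (hv : v ∉ s) :
    ComputableWithin (pairInput v '' s) f (#s / 2) := by
  obtain ⟨b, hb⟩ := exists_card_filter_eq_le_half s fun j => f (pairInput v j)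
  set Q := {j ∈ s | f (pairInput v j) = b}
  have hvQ : v ∉ Q := fun h => hv (mem_filter.mp h).1
  suffices h : ComputableWithin (pairInput v '' s) f (#Q + 0) from h.mono subset_rfl hb
  refine .query_finset Q fun A hA => ?_
  refine computableWithin_of_forall_eq (b := if A.Nonempty then b else !b) ?_
  rintro _ ⟨⟨j, hj, rfl⟩, hjA⟩
  have apply_iff {i} (hi : i ∈ Q) : pairInput v j i = true ↔ i = j := by
    simp [pairInput_apply_eq_true, ne_of_mem_of_not_mem hi hvQ]
  have nonempty_iff : A.Nonempty ↔ j ∈ Q := by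
    constructor
    · rintro ⟨i, hi⟩
      rw [← (apply_iff (hA hi)).mp (apply_of_mem_subcube hjA hA hi)]
      exact hA hi
    · intro hjQ
      exact ⟨j, (hjA j hjQ).mp ((apply_iff hjQ).mpr rfl)⟩
  have mem_iff : j ∈ Q ↔ f (pairInput v j) = b := by simpa [Q] using fun _ => hj
  simp only [nonempty_iff, mem_iff]
  split_ifs with hfb
  · exact hfb
  · exact Bool.eq_not_of_ne hfb

theorem IsMonoSet.computableWithin_inter_subcube (hs : IsMonoSet f s) {A : Finset (Fin n)}
    (hA : A ⊆ sᶜ) : ComputableWithin (cubeSlice (Fin n) 2 ∩ subcube sᶜ A) f (#s / 2) := by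
  rcases A.eq_empty_or_nonempty with rfl | ⟨v, hv⟩
  · obtain ⟨b, hb⟩ : ∃ b, ∀ i ∈ s, ∀ j ∈ s, i ≠ j → f (pairInput i j) = b := by
      rcases hs with hclique | hindep
      exacts [⟨true, hclique⟩, ⟨false, hindep⟩]
    refine computableWithin_of_forall_eq (b := b) ?_
    rintro x ⟨hx, hxs⟩
    obtain ⟨i, j, hij, rfl⟩ := exists_eq_pairInput hx
    have mem_s {t} (ht : pairInput i j t = true) : t ∈ s :=
      notMem_compl.mp (notMem_of_mem_subcube hxs ht (notMem_empty t))
    exact hb i (mem_s (pairInput_apply_eq_true.mpr (.inl rfl))) j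
      (mem_s (pairInput_apply_eq_true.mpr (.inr rfl))) hij
  rcases eq_singleton_or_nontrivial hv with rfl | ⟨i, hi, j, hj, hij⟩
  · refine (computableWithin_image_pairInput (mem_compl.mp (hA hv))).mono ?_ le_rfl
    rintro x ⟨hx, hxs⟩
    obtain ⟨j, hjv, rfl⟩ := exists_eq_pairInput_of_apply hx (apply_of_mem_subcube hxs hA hv)
    have hj : pairInput v j j = true := pairInput_apply_eq_true.mpr (.inr rfl)
    exact ⟨j, notMem_compl.mp (notMem_of_mem_subcube hxs hj (notMem_singleton.mpr hjv)), rfl⟩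
  · refine computableWithin_of_forall_eq (b := f (pairInput i j)) ?_
    rintro x ⟨hx, hxs⟩
    rw [eq_pairInput_of_mem_cubeSlice hx hij (apply_of_mem_subcube hxs hA hi)
      (apply_of_mem_subcube hxs hA hj)]

theorem IsMonoSet.dquery_le (hs : IsMonoSet f s) :
    Dquery (cubeSlice (Fin n) 2) f ≤ #sᶜ + #s / 2 :=
  ComputableWithin.dquery_le <| .query_finset sᶜ fun _ hA => hs.computableWithin_inter_subcube hA

theorem exists_isMonoSet_card_eq_mG (f : (Fin n → Bool) → Bool) :
    ∃ s, IsMonoSet f s ∧ #s = mG f := by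
  have hne : {m | ∃ s, IsMonoSet f s ∧ #s = m}.Nonempty := ⟨0, ∅, .inl (by simp), card_empty⟩
  have hbdd : BddAbove {m | ∃ s, IsMonoSet f s ∧ #s = m} := by
    refine ⟨n, ?_⟩
    rintro _ ⟨s, -, rfl⟩
    exact card_finset_fin_le s
  exact Nat.sSup_mem hne hbdd

end WeightTwo

/-- For every Boolean function `f` on the weight-2 slice of `{0,1}^n`,
`D(f) ≤ n - m(G_f)/2`. -/
theorem stmt3 (n : ℕ) (f : (Fin n → Bool) → Bool) :
    (Dquery (cubeSlice (Fin n) 2) f : ℝ) ≤ (n : ℝ) - (mG f : ℝ) / 2 := by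
  obtain ⟨s, hs, hcard⟩ := exists_isMonoSet_card_eq_mG f
  have hcompl : #s + #sᶜ = n := by simp
  have hquery : Dquery (cubeSlice (Fin n) 2) f ≤ #sᶜ + #s / 2 := hs.dquery_le
  have hbound : 2 * Dquery (cubeSlice (Fin n) 2) f + mG f ≤ 2 * n := by lia
  have hboundReal : (2 * Dquery (cubeSlice (Fin n) 2) f + mG f : ℝ) ≤ 2 * n := by
    exact_mod_cast hbound
  linarith
end

section
/- For every integer h ≥ 1 there exists k₀ such that for all k ≥ k₀ and every Boolean function f on the slice {x ∈ {0,1}^{2k} : |x| = k}, f has a balanced certificate of size at most 2(k − h); that is, mBC(f) ≤ 2(k − h). -/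
/-- The size of a partial assignment: the number of fixed coordinates. -/
def certSize {ι : Type} [Fintype ι] (C : ι → Option Bool) : ℕ :=
  (Finset.univ.filter fun i => (C i).isSome).card

/-- `x` is consistent with the partial assignment `C`. -/
def ConsistentWith {ι : Type} (C : ι → Option Bool) (x : ι → Bool) : Prop :=
  ∀ i : ι, ∀ b : Bool, C i = some b → x i = b

/-- A partial assignment is balanced if it fixes as many coordinates to `0` as to `1`. -/
def BalancedCert {ι : Type} [Fintype ι] (C : ι → Option Bool) : Prop :=
  (Finset.univ.filter fun i => C i = some false).card =
    (Finset.univ.filter fun i => C i = some true).card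

/-- `C` is a `b`-certificate of `f` on the domain `S`. -/
def IsCertificate {ι : Type} (S : Set (ι → Bool)) (f : (ι → Bool) → Bool)
    (C : ι → Option Bool) (b : Bool) : Prop :=
  ∀ x ∈ S, ConsistentWith C x → f x = b

/-- Balanced certificate complexity of `f` at `x`: the smallest size of a balanced
`f x`-certificate consistent with `x`. -/
noncomputable def BC {ι : Type} [Fintype ι] (S : Set (ι → Bool))
    (f : (ι → Bool) → Bool) (x : ι → Bool) : ℕ :=
  sInf {s | ∃ C : ι → Option Bool, BalancedCert C ∧ ConsistentWith C x ∧
    IsCertificate S f C (f x) ∧ certSize C = s}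

/-- Minimum balanced certificate complexity of `f`. -/
noncomputable def mBC {ι : Type} [Fintype ι] (S : Set (ι → Bool))
    (f : (ι → Bool) → Bool) : ℕ :=
  sInf {m | ∃ x ∈ S, BC S f x = m}

/-! Fix `m` coordinates to `1` and colour each `p`-subset `U` of the remaining `m + p + q`
coordinates by the value of `f` at the point whose further ones are exactly `U`. Ramsey's theorem
for `p`-uniform hypergraphs gives, for large `m`, a set `T` of `p + q` coordinates all of whose
`p`-subsets have the same colour. Fixing the `m` coordinates outside both sets to `0` then forces
the other `p` ones into `T`, so `f` is constant on what remains of the slice. -/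

open Finset

section Ramsey

variable {α κ : Type*}

/-- The `r`-element subsets of `T` all have colour `b` under `c`. A colouring of `r`-sets is
encoded as a function on all finite sets, of which only the values on `r`-sets matter. -/
def IsMonochromatic (c : Finset α → κ) (r : ℕ) (b : κ) (T : Finset α) : Prop :=
  ∀ ⦃U : Finset α⦄, U ⊆ T → #U = r → c U = b

namespace IsMonochromatic

variable {c : Finset α → κ} {r : ℕ} {b : κ} {T T' : Finset α}

theorem mono (hT : IsMonochromatic c r b T) (hT' : T' ⊆ T) : IsMonochromatic c r b T' :=
  fun _ hU => hT (hU.trans hT')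

theorem empty (c : Finset α → κ) (r : ℕ) (b : κ) : IsMonochromatic c (r + 1) b ∅ := by
  intro U hU hcard
  simp [subset_empty.mp hU] at hcard

theorem insert [DecidableEq α] {a : α}
    (hlink : IsMonochromatic (fun U => c (insert a U)) r b T)
    (hT : IsMonochromatic c (r + 1) b T) : IsMonochromatic c (r + 1) b (insert a T) := by
  intro U hU hcard
  by_cases ha : a ∈ U
  · rw [← insert_erase ha]
    exact hlink (subset_insert_iff.mp hU) (by rw [card_erase_of_mem ha, hcard, Nat.add_sub_cancel])
  · exact hT ((subset_insert_iff_of_notMem ha).mp hU) hcard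

end IsMonochromatic

/-- The upper bound `R_r(m) ≤ N` on the Ramsey number for `r`-sets with target sizes
`m : κ → ℕ`, restricted to ground sets in `α`: any colouring of the `r`-subsets of a set with at
least `N` elements has, for some colour `b`, a monochromatic set of size `m b` in colour `b`. -/
def IsRamseyBound (α : Type*) (r : ℕ) (m : κ → ℕ) (N : ℕ) : Prop :=
  ∀ S : Finset α, N ≤ #S → ∀ c : Finset α → κ, ∃ b, ∃ T ⊆ S, #T = m b ∧ IsMonochromatic c r b T

namespace IsRamseyBound

variable {r : ℕ} {m : κ → ℕ}

theorem zero_of_le {N : ℕ} (hN : ∀ b, m b ≤ N) : IsRamseyBound α 0 m N := by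
  intro S hS c
  obtain ⟨T, hTS, hT⟩ := exists_subset_card_eq ((hN (c ∅)).trans hS)
  exact ⟨c ∅, T, hTS, hT, fun U _ hU => by rw [card_eq_zero.mp hU]⟩

theorem of_target_eq_zero {b : κ} (hb : m b = 0) : IsRamseyBound α (r + 1) m 0 :=
  fun S _ c => ⟨b, ∅, empty_subset S, hb.symm, .empty c r b⟩

theorem succ [DecidableEq κ] {N : κ → ℕ} {M : ℕ} (hm : ∀ b, m b ≠ 0)
    (hN : ∀ b, IsRamseyBound α (r + 1) (Function.update m b (m b - 1)) (N b))
    (hM : IsRamseyBound α r N M) : IsRamseyBound α (r + 1) m (M + 1) := by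
  classical
  intro S hS c
  obtain ⟨a, ha⟩ : S.Nonempty := card_pos.mp (by lia)
  obtain ⟨b, T, hTS, hT, hlink⟩ := hM (S.erase a) (by rw [card_erase_of_mem ha]; lia)
    (fun U => c (insert a U))
  obtain ⟨b', T', hT'T, hT', hmono⟩ := hN b T hT.ge c
  have haT' : a ∉ T' := fun h => notMem_erase a S (hTS (hT'T h))
  have hT'S : T' ⊆ S := (hT'T.trans hTS).trans (erase_subset a S)
  obtain rfl | hb := eq_or_ne b' b
  · refine ⟨b', insert a T', insert_subset ha hT'S, ?_, (hlink.mono hT'T).insert hmono⟩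
    rw [card_insert_of_notMem haT', hT', Function.update_self, Nat.sub_one_add_one (hm b')]
  · exact ⟨b', T', hT'S, by rw [hT', Function.update_of_ne hb], hmono⟩

end IsRamseyBound

theorem exists_isRamseyBound [Finite κ] (r : ℕ) (m : κ → ℕ) :
    ∃ N, ∀ α : Type*, IsRamseyBound α r m N := by
  classical
  induction r generalizing m with
  | zero =>
    obtain ⟨N, hN⟩ := Finite.exists_le m
    exact ⟨N, fun _ => .zero_of_le hN⟩
  | succ r ih_r =>
    induction m using WellFoundedLT.induction with
    | ind m ih_m =>
      by_cases hm : ∀ b, m b ≠ 0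
      · have hlt (b : κ) : Function.update m b (m b - 1) < m :=
          update_lt_self_iff.mpr (Nat.sub_one_lt (hm b))
        choose N hN using fun b => ih_m _ (hlt b)
        obtain ⟨M, hM⟩ := ih_r N
        exact ⟨M + 1, fun α => .succ hm (fun b => hN b α) (hM α)⟩
      · push Not at hm
        obtain ⟨b, hb⟩ := hm
        exact ⟨0, fun _ => .of_target_eq_zero hb⟩

end Ramsey

section Certificates

variable {ι : Type} [Fintype ι]

theorem mBC_le_certSize {S : Set (ι → Bool)} {f : (ι → Bool) → Bool} {C : ι → Option Bool}
    {b : Bool} {x : ι → Bool} (hx : x ∈ S) (hCx : ConsistentWith C x) (hbal : BalancedCert C)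
    (hC : IsCertificate S f C b) : mBC S f ≤ certSize C := by
  have hBC : BC S f x ≤ certSize C :=
    Nat.sInf_le ⟨C, hbal, hCx, by rwa [hC x hx hCx], rfl⟩
  exact le_trans (Nat.sInf_le ⟨x, hx, rfl⟩) hBC

/-- The set of coordinates at which a point of the cube is `1`. -/
def ones (x : ι → Bool) : Finset ι := {i | x i = true}

variable [DecidableEq ι]

/-- The point of the cube whose set of ones is `s`. -/
def charPoint (s : Finset ι) : ι → Bool := fun i => decide (i ∈ s)

@[simp]
theorem ones_charPoint (s : Finset ι) : ones (charPoint s) = s := by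
  ext i
  simp [ones, charPoint]

@[simp]
theorem charPoint_ones (x : ι → Bool) : charPoint (ones x) = x := by
  ext i
  simp [ones, charPoint]

theorem charPoint_mem_cubeSlice_iff {s : Finset ι} {k : ℕ} :
    charPoint s ∈ cubeSlice ι k ↔ #s = k := by
  change #(ones (charPoint s)) = k ↔ #s = k
  rw [ones_charPoint]

/-- The partial assignment that leaves `T` free and agrees with `charPoint A` off `T`. -/
def partialCharPoint (A T : Finset ι) : ι → Option Bool :=
  fun i => if i ∈ T then none else some (charPoint A i)

variable {A T : Finset ι}

theorem consistentWith_partialCharPoint_iff {x : ι → Bool} :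
    ConsistentWith (partialCharPoint A T) x ↔ ones x \ T = A \ T := by
  have hpoint (i : ι) : (∀ b, partialCharPoint A T i = some b → x i = b) ↔
      (i ∈ ones x \ T ↔ i ∈ A \ T) := by
    by_cases hi : i ∈ T <;> cases hxi : x i <;>
      simp [partialCharPoint, charPoint, ones, hi, hxi]
  simp only [ConsistentWith, hpoint, Finset.ext_iff]

theorem certSize_partialCharPoint : certSize (partialCharPoint A T) = #Tᶜ := by
  unfold certSize
  congr 1
  ext i
  simp [partialCharPoint]

theorem balancedCert_partialCharPoint_iff :
    BalancedCert (partialCharPoint A T) ↔ #(A ∪ T)ᶜ = #(A \ T) := by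
  have hfalse : ({i | partialCharPoint A T i = some false} : Finset ι) = (A ∪ T)ᶜ := by
    ext i
    simp [partialCharPoint, charPoint, and_comm]
  have htrue : ({i | partialCharPoint A T i = some true} : Finset ι) = A \ T := by
    ext i
    simp [partialCharPoint, charPoint, and_comm]
  rw [BalancedCert, hfalse, htrue]

theorem IsMonochromatic.isCertificate {f : (ι → Bool) → Bool} {p : ℕ} {b : Bool}
    (hmono : IsMonochromatic (fun U => f (charPoint (A ∪ U))) p b T) (hAT : Disjoint A T) :
    IsCertificate (cubeSlice ι (#A + p)) f (partialCharPoint A T) b := by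
  intro x hx hCx
  have hones : A ∪ ones x ∩ T = ones x := by
    rw [← hAT.sdiff_eq_left, ← consistentWith_partialCharPoint_iff.mp hCx, sdiff_union_inter]
  have hcard : #(ones x ∩ T) = p := by
    have hweight : #(A ∪ ones x ∩ T) = #A + p := hones.symm ▸ hx
    rwa [card_union_of_disjoint (hAT.mono_right inter_subset_right), Nat.add_left_cancel_iff]
      at hweight
  simpa only [hones, charPoint_ones] using hmono inter_subset_right hcard

end Certificates

theorem stmt9_general (p q : ℕ) :
    ∃ m₀ : ℕ, ∀ m : ℕ, m₀ ≤ m → ∀ (ι : Type) [Fintype ι], Fintype.card ι = 2 * m + p + q →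
      ∀ f : (ι → Bool) → Bool, mBC (cubeSlice ι (m + p)) f ≤ 2 * m := by
  classical
  obtain ⟨N, hN⟩ := exists_isRamseyBound p fun _ : Bool => p + q
  refine ⟨N, fun m hm ι _ hι f => ?_⟩
  obtain ⟨A, -, rfl⟩ := exists_subset_card_eq (s := (univ : Finset ι)) (n := m)
    (by rw [card_univ]; lia)
  obtain ⟨b, T, hTA, hT, hmono⟩ := hN ι Aᶜ (by rw [card_compl]; lia)
    fun U => f (charPoint (A ∪ U))
  obtain ⟨U, hUT, hU⟩ := exists_subset_card_eq (s := T) (n := p) (by lia)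
  have hAT : Disjoint A T := subset_compl_iff_disjoint_left.mp hTA
  have hx : charPoint (A ∪ U) ∈ cubeSlice ι (#A + p) :=
    charPoint_mem_cubeSlice_iff.mpr (by rw [card_union_of_disjoint (hAT.mono_right hUT), hU])
  have hconsistent : ConsistentWith (partialCharPoint A T) (charPoint (A ∪ U)) := by
    rw [consistentWith_partialCharPoint_iff, ones_charPoint, union_sdiff_distrib,
      sdiff_eq_empty_iff_subset.mpr hUT, union_empty]
  have hbalanced : BalancedCert (partialCharPoint A T) := by
    rw [balancedCert_partialCharPoint_iff, hAT.sdiff_eq_left, card_compl,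
      card_union_of_disjoint hAT]
    lia
  calc mBC (cubeSlice ι (#A + p)) f
      ≤ certSize (partialCharPoint A T) :=
        mBC_le_certSize hx hconsistent hbalanced (hmono.isCertificate hAT)
    _ = 2 * #A := by rw [certSize_partialCharPoint, card_compl]; lia

/-- For every `h ≥ 1` there exists `k₀` such that for all `k ≥ k₀`, every Boolean function
on the balanced slice of `{0,1}^{2k}` has a balanced certificate of size at most `2(k-h)`;
that is, `mBC(f) ≤ 2(k - h)`. -/
theorem stmt9 (h : ℕ) (hh : 1 ≤ h) :
    ∃ k₀ : ℕ, ∀ k : ℕ, k₀ ≤ k → ∀ f : (Fin (2 * k) → Bool) → Bool,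
      mBC (cubeSlice (Fin (2 * k)) k) f ≤ 2 * (k - h) := by
  obtain ⟨m₀, hm₀⟩ := stmt9_general h h
  refine ⟨m₀ + h, fun k hk f => ?_⟩
  simpa only [Nat.sub_add_cancel (le_of_add_le_right hk)] using
    hm₀ (k - h) (Nat.le_sub_of_add_le hk) (Fin (2 * k)) (by rw [Fintype.card_fin]; lia) f
end

section
/- If f is a Boolean function on the slice {x ∈ {0,1}^n : |x| = k} such that f⁻¹(1) is an independent set in the Johnson graph J(n,k), then D(f) ≥ log₂(|f⁻¹(1)|). -/
/-!
Two distinct points `x`, `y` of a slice that lie in a common subcube have a free coordinate `i` with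
`x i = 1`, `y i = 0` and a free coordinate `j` with `x j = 0`, `y j = 1`. Exchanging `x i` and `x j`
gives a neighbour of `x` in the Johnson graph inside the same subcube. The inputs reaching a given
leaf of a decision tree form a subcube on which the output is constant, so if the 1-inputs are
independent, each of them reaches a leaf of its own. A tree of depth `d` has at most `2 ^ d` leaves.
-/

open Finset Function

theorem logb_le_natCast_of_le_pow {b x : ℝ} {d : ℕ} (hb : 1 < b) (hx : 0 ≤ x) (h : x ≤ b ^ d) :
    Real.logb b x ≤ d := by
  rcases hx.eq_or_lt with rfl | hx
  · simp
  · rwa [Real.logb_le_iff_le_rpow hb hx, Real.rpow_natCast]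

namespace DTree

variable {ι : Type}

/-- The set of variables queried by a decision tree on an input `x`. The inputs reaching the same
leaf as `x` are the `y` with `Set.EqOn x y (T.queried x)`. -/
def queried : DTree ι → (ι → Bool) → Set ι
  | .leaf _, _ => ∅
  | .node i t0 t1, x => insert i (if x i then queried t1 x else queried t0 x)

theorem eval_eq_of_eqOn_queried {T : DTree ι} {x y : ι → Bool}
    (h : Set.EqOn x y (T.queried x)) : T.eval y = T.eval x := by
  induction T with
  | leaf b => rfl
  | node i t0 t1 ih0 ih1 =>
    obtain ⟨hi, hrest⟩ := Set.forall_mem_insert.1 h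
    simp only [eval, ← hi]
    split_ifs at hrest ⊢
    exacts [ih1 hrest, ih0 hrest]

theorem card_le_two_pow (T : DTree ι) {d : ℕ} {A : Finset (ι → Bool)}
    (hcost : ∀ x ∈ A, T.cost x ≤ d)
    (hsep : ∀ x ∈ A, ∀ y ∈ A, Set.EqOn x y (T.queried x) → x = y) : #A ≤ 2 ^ d := by
  induction T generalizing d A with
  | leaf b =>
    have hone : #A ≤ 1 := card_le_one.2 fun x hx y hy ↦ hsep x hx y hy (Set.eqOn_empty x y)
    exact hone.trans Nat.one_le_two_pow
  | node i t0 t1 ih0 ih1 =>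
    cases d with
    | zero =>
      have hempty : A = ∅ := eq_empty_of_forall_notMem fun x hx ↦ by
        simpa [cost] using hcost x hx
      simp [hempty]
    | succ d =>
      have hhalf (b : Bool) : #{x ∈ A | x i = b} ≤ 2 ^ d := by
        have hcost' : ∀ x ∈ A.filter (· i = b), (cond b t1 t0).cost x ≤ d := by
          intro x hx
          obtain ⟨hxA, hxi⟩ := mem_filter.1 hx
          cases b <;> simpa [cost, hxi, add_comm] using hcost x hxA
        have hsep' : ∀ x ∈ A.filter (· i = b), ∀ y ∈ A.filter (· i = b),
            Set.EqOn x y ((cond b t1 t0).queried x) → x = y := by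
          intro x hx y hy hxy
          obtain ⟨hxA, hxi⟩ := mem_filter.1 hx
          obtain ⟨hyA, hyi⟩ := mem_filter.1 hy
          refine hsep x hxA y hyA (Set.forall_mem_insert.2 ⟨hxi.trans hyi.symm, ?_⟩)
          cases b <;> simpa [hxi, Set.EqOn] using hxy
        cases b
        exacts [ih0 hcost' hsep', ih1 hcost' hsep']
      calc #A = #{x ∈ A | x i = true} + #{x ∈ A | x i = false} := by
            simpa only [Bool.not_eq_true] using
              (card_filter_add_card_filter_not (s := A) fun x ↦ x i = true).symm
        _ ≤ 2 ^ d + 2 ^ d := Nat.add_le_add (hhalf true) (hhalf false)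
        _ = 2 ^ (d + 1) := by rw [pow_succ, mul_two]

theorem exists_eval_eq_of_dependsOn {s : Finset ι} {f : (ι → Bool) → Bool}
    (hf : DependsOn f (s : Set ι)) : ∃ T : DTree ι, T.eval = f := by
  classical
  induction s using Finset.induction_on generalizing f with
  | empty => exact ⟨.leaf (f fun _ ↦ false), funext fun x ↦ hf (by simp)⟩
  | insert a s has ih =>
    have hrestrict (b : Bool) : ∃ T : DTree ι, T.eval = fun x ↦ f (update x a b) :=
      ih (by simpa [has] using hf.update a b)
    obtain ⟨T0, h0⟩ := hrestrict false
    obtain ⟨T1, h1⟩ := hrestrict true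
    refine ⟨.node a T0 T1, funext fun x ↦ ?_⟩
    simp only [eval, h0, h1]
    split_ifs with hx
    · rw [← hx, update_eq_self]
    · rw [← Bool.eq_false_of_not_eq_true hx, update_eq_self]

end DTree

theorem exists_computes_cost_le_Dquery {ι : Type} [Finite ι] (S : Set (ι → Bool))
    (f : (ι → Bool) → Bool) :
    ∃ T : DTree ι, Computes T S f ∧ ∀ x ∈ S, T.cost x ≤ Dquery S f := by
  have := Fintype.ofFinite ι
  obtain ⟨T, rfl⟩ : ∃ T : DTree ι, T.eval = f :=
    DTree.exists_eval_eq_of_dependsOn (s := univ) (by simpa using dependsOn_univ f)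
  obtain ⟨d, hd⟩ := Finite.exists_le T.cost
  have hne : {d | ∃ T' : DTree ι, Computes T' S T.eval ∧ ∀ x ∈ S, T'.cost x ≤ d}.Nonempty :=
    ⟨d, T, fun _ _ ↦ rfl, fun x _ ↦ hd x⟩
  exact Nat.sInf_mem hne

section Slice

variable {ι κ : Type} [Fintype ι] [Fintype κ]

theorem hamWeight_comp_equiv (x : ι → Bool) (e : κ ≃ ι) : hamWeight (x ∘ e) = hamWeight x :=
  card_equiv e fun i ↦ by simp

theorem hamWeight_strictMono : StrictMono (hamWeight : (ι → Bool) → ℕ) := by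
  intro x y hxy
  obtain ⟨hle, i, hi⟩ := Pi.lt_def.1 hxy
  obtain ⟨hxi, hyi⟩ := Bool.lt_iff.1 hi
  exact card_lt_card <| (ssubset_iff_of_subset <| monotone_filter_right _ fun j _ ↦ hle j).2
    ⟨i, by simp [hxi, hyi]⟩

theorem exists_eq_true_and_eq_false_of_hamWeight_le {x y : ι → Bool}
    (hle : hamWeight y ≤ hamWeight x) (hne : x ≠ y) : ∃ i, x i = true ∧ y i = false := by
  have hxy : ¬ x ≤ y := fun h ↦ (hamWeight_strictMono (h.lt_of_ne hne)).not_ge hle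
  obtain ⟨i, hi⟩ := not_forall.1 hxy
  exact ⟨i, (Bool.lt_iff.1 (not_le.1 hi)).symm⟩

theorem hammingDist_comp_swap {α : Type*} [DecidableEq α] [DecidableEq ι] {x : ι → α} {i j : ι}
    (hij : x i ≠ x j) : hammingDist x (x ∘ Equiv.swap i j) = 2 := by
  have hsupp : ({l | x l ≠ (x ∘ Equiv.swap i j) l} : Finset ι) = {i, j} := by
    ext l
    rcases eq_or_ne l i with rfl | hli
    · simpa using hij
    rcases eq_or_ne l j with rfl | hlj
    · simpa using hij.symm
    simp [Equiv.swap_apply_of_ne_of_ne hli hlj, hli, hlj]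
  rw [hammingDist, hsupp, card_pair (ne_of_apply_ne x hij)]

theorem exists_hammingDist_eq_two_of_hamWeight_eq {x y : ι → Bool}
    (hxy : hamWeight x = hamWeight y) (hne : x ≠ y) :
    ∃ z, hamWeight z = hamWeight x ∧ hammingDist x z = 2 ∧ ∀ l, x l = y l → x l = z l := by
  classical
  obtain ⟨i, hxi, hyi⟩ := exists_eq_true_and_eq_false_of_hamWeight_le hxy.ge hne
  obtain ⟨j, hyj, hxj⟩ := exists_eq_true_and_eq_false_of_hamWeight_le hxy.le hne.symm
  refine ⟨x ∘ Equiv.swap i j, hamWeight_comp_equiv x _, hammingDist_comp_swap (by simp [hxi, hxj]),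
    fun l hl ↦ ?_⟩
  have hli : l ≠ i := by rintro rfl; simp [hxi, hyi] at hl
  have hlj : l ≠ j := by rintro rfl; simp [hxj, hyj] at hl
  rw [comp_apply, Equiv.swap_apply_of_ne_of_ne hli hlj]

theorem Computes.eq_of_eqOn_queried {k : ℕ} {f : (ι → Bool) → Bool} {T : DTree ι}
    (hT : Computes T (cubeSlice ι k) f)
    (hind : ∀ x ∈ cubeSlice ι k, ∀ y ∈ cubeSlice ι k,
      f x = true → f y = true → hammingDist x y = 2 → False)
    {x y : ι → Bool} (hx : x ∈ cubeSlice ι k) (hy : y ∈ cubeSlice ι k) (hfx : f x = true)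
    (hxy : Set.EqOn x y (T.queried x)) : x = y := by
  by_contra hne
  obtain ⟨z, hzx, hdist, hz⟩ := exists_hammingDist_eq_two_of_hamWeight_eq (hx.trans hy.symm) hne
  have hzk : z ∈ cubeSlice ι k := hzx.trans hx
  have hfz : f z = f x := by
    rw [← hT z hzk, ← hT x hx]
    exact DTree.eval_eq_of_eqOn_queried fun l hl ↦ hz l (hxy hl)
  exact hind x hx z hzk hfx (hfz.trans hfx) hdist

end Slice

theorem stmt10_general {ι : Type} [Fintype ι] [DecidableEq ι] (k : ℕ) (f : (ι → Bool) → Bool)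
    (hind : ∀ x ∈ cubeSlice ι k, ∀ y ∈ cubeSlice ι k,
      f x = true → f y = true → hammingDist x y = 2 → False) :
    Real.logb 2 ((Finset.univ.filter fun x : ι → Bool => hamWeight x = k ∧ f x = true).card) ≤
      (Dquery (cubeSlice ι k) f : ℝ) := by
  obtain ⟨T, hT, hcost⟩ := exists_computes_cost_le_Dquery (cubeSlice ι k) f
  have hcard : #{x : ι → Bool | hamWeight x = k ∧ f x = true} ≤ 2 ^ Dquery (cubeSlice ι k) f := by
    refine T.card_le_two_pow (fun x hx ↦ hcost x ((mem_filter_univ x).1 hx).1) ?_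
    intro x hx y hy hxy
    obtain ⟨hxk, hfx⟩ := (mem_filter_univ x).1 hx
    obtain ⟨hyk, -⟩ := (mem_filter_univ y).1 hy
    exact hT.eq_of_eqOn_queried hind hxk hyk hfx hxy
  exact logb_le_natCast_of_le_pow one_lt_two (Nat.cast_nonneg _) (by exact_mod_cast hcard)

/-- If `f` is a Boolean function on the `k`-th slice of `{0,1}^n` whose set of 1-inputs is
an independent set in the Johnson graph `J(n,k)` (no two 1-inputs at Hamming distance 2),
then `D(f) ≥ log₂ |f⁻¹(1)|`. -/
theorem stmt10 (n k : ℕ) (f : (Fin n → Bool) → Bool)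
    (hind : ∀ x ∈ cubeSlice (Fin n) k, ∀ y ∈ cubeSlice (Fin n) k,
      f x = true → f y = true → hammingDist x y = 2 → False) :
    Real.logb 2
        ((Finset.univ.filter fun x : Fin n → Bool => hamWeight x = k ∧ f x = true).card) ≤
      (Dquery (cubeSlice (Fin n) k) f : ℝ) :=
  stmt10_general k f hind
end
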